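/- For every smooth function φ on U one has ∇^I(φ, x) + ∇^{II}(φ, n) = 0, i.e. g^{ij} φ_{/i} x_{/j} + b^{ij} φ_{/i} n_{/j} = 0 as an ℝ³-valued identity on U. -/

import Mathlib

open Matrix

noncomputable section

/-- The parameter domain `ℝ²`. -/
abbrev Param : Type := Fin 2 → ℝ

/-- Vectors in Euclidean 3-space. -/
abbrev Vec3 : Type := Fin 3 → ℝ

/-- Partial derivative of a vector-valued function in the `i`-th coordinate direction. -/
noncomputable def pd (i : Fin 2) (f : Param → Vec3) (u : Param) : Vec3 :=
  fderiv ℝ f u (Pi.single i 1)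

/-- Partial derivative of a scalar function in the `i`-th coordinate direction. -/
noncomputable def pds (i : Fin 2) (f : Param → ℝ) (u : Param) : ℝ :=
  fderiv ℝ f u (Pi.single i 1)

/-- The Euclidean inner product on `ℝ³`. -/
def dot3 (a b : Vec3) : ℝ := ∑ k, a k * b k

/-- The Euclidean norm on `ℝ³`. -/
noncomputable def norm3 (a : Vec3) : ℝ := Real.sqrt (dot3 a a)

/-- The Gauss map `n = (x_{/1} × x_{/2}) / ‖x_{/1} × x_{/2}‖`. -/
noncomputable def gaussMap (x : Param → Vec3) (u : Param) : Vec3 :=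
  (norm3 (crossProduct (pd 0 x u) (pd 1 x u)))⁻¹ • crossProduct (pd 0 x u) (pd 1 x u)

/-- Components `g_{ij}` of the first fundamental form. -/
noncomputable def fformI (x : Param → Vec3) (u : Param) : Matrix (Fin 2) (Fin 2) ℝ :=
  Matrix.of fun i j => dot3 (pd i x u) (pd j x u)

/-- Components `b_{ij} = ⟨∂²x/∂u^i∂u^j, n⟩` of the second fundamental form. -/
noncomputable def fformII (x : Param → Vec3) (u : Param) : Matrix (Fin 2) (Fin 2) ℝ :=
  Matrix.of fun i j => dot3 (pd i (pd j x) u) (gaussMap x u)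

/-- Components `e_{ij} = ⟨n_{/i}, n_{/j}⟩` of the third fundamental form. -/
noncomputable def fformIII (x : Param → Vec3) (u : Param) : Matrix (Fin 2) (Fin 2) ℝ :=
  Matrix.of fun i j => dot3 (pd i (gaussMap x) u) (pd j (gaussMap x) u)

/-- The Gauss curvature `K = det(b_{ij}) / det(g_{ij})`. -/
noncomputable def gaussCurv (x : Param → Vec3) (u : Param) : ℝ :=
  (fformII x u).det / (fformI x u).det

/-- The mean curvature `H = (1/2) g^{ij} b_{ij}`. -/
noncomputable def meanCurv (x : Param → Vec3) (u : Param) : ℝ :=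
  (1 / 2) * ∑ i, ∑ j, (fformI x u)⁻¹ i j * fformII x u i j

/-- First Beltrami operator `∇^J(φ, ψ) = a^{ij} φ_{/i} ψ_{/j}` with respect to the
fundamental form with component matrix `a`, for scalar `φ` and `ℝ³`-valued `ψ`. -/
noncomputable def beltrami1 (a : Param → Matrix (Fin 2) (Fin 2) ℝ)
    (φ : Param → ℝ) (ψ : Param → Vec3) (u : Param) : Vec3 :=
  ∑ i, ∑ j, ((a u)⁻¹ i j * pds i φ u) • pd j ψ u

/-- Second Beltrami operator
`Δ^J f = −(1/√|det a|) ∂_i (√|det a| a^{ij} ∂_j f)` with respect to the fundamental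
form with component matrix `a`, acting componentwise on `ℝ³`-valued functions. -/
noncomputable def beltrami2 (a : Param → Matrix (Fin 2) (Fin 2) ℝ)
    (f : Param → Vec3) (u : Param) : Vec3 :=
  -((Real.sqrt |(a u).det|)⁻¹ •
    ∑ i, ∑ j, pd i (fun v => (Real.sqrt |(a v).det| * (a v)⁻¹ i j) • pd j f v) u)

/-- `x` is an immersion on `U`: the partial derivatives are linearly independent. -/
def Immersed (x : Param → Vec3) (U : Set Param) : Prop :=
  ∀ u ∈ U, LinearIndependent ℝ ![pd 0 x u, pd 1 x u]

/-- `f` is nonconstant on `U`. -/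
def NonconstOn (f : Param → Vec3) (U : Set Param) : Prop :=
  ¬ ∃ v : Vec3, ∀ u ∈ U, f u = v

/-!
Let `X` and `N` be the `2 × 3` matrices whose rows are the partial derivatives of `x` and of the
Gauss map `n`. Then `X Xᵀ = g`, and differentiating `⟨n, x_{/j}⟩ = 0` gives `N Xᵀ = -b`. Hence the
matrix `g⁻¹ X + b⁻¹ N` is killed by right multiplication with `Xᵀ`; it also kills `n`, because `n`
is normal to the surface and `⟨n, n⟩ = 1`. Since `x_{/1}`, `x_{/2}`, `n` span `ℝ³`, the matrix
vanishes, and the identity is this fact contracted with the partial derivatives of `φ`.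
-/

open scoped Topology

section CrossProduct

variable {R : Type*} [CommRing R]

theorem mulVec_cross_self (A : Matrix (Fin 2) (Fin 3) R) : A *ᵥ (A 0 ⨯₃ A 1) = 0 := by
  funext i
  fin_cases i
  · exact dot_self_cross (A 0) (A 1)
  · exact dot_cross_self (A 0) (A 1)

theorem det_mul_transpose_eq_cross_dotProduct_cross (A : Matrix (Fin 2) (Fin 3) R) :
    (A * Aᵀ).det = A 0 ⨯₃ A 1 ⬝ᵥ A 0 ⨯₃ A 1 := by
  rw [Matrix.det_fin_two, cross_dot_cross]
  rfl

variable [LinearOrder R] [IsStrictOrderedRing R]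

theorem eq_zero_of_dotProduct_eq_zero_of_dotProduct_cross_eq_zero {p q w : Fin 3 → R}
    (hpq : p ⨯₃ q ≠ 0) (hp : w ⬝ᵥ p = 0) (hq : w ⬝ᵥ q = 0) (hn : w ⬝ᵥ p ⨯₃ q = 0) :
    w = 0 := by
  have cross_eq_zero : w ⨯₃ (p ⨯₃ q) = 0 := by
    rw [cross_cross_eq_smul_sub_smul', hq, dotProduct_comm p w, hp, zero_smul, zero_smul, sub_zero]
  have lagrange := cross_dot_cross w (p ⨯₃ q) w (p ⨯₃ q)
  rw [cross_eq_zero, hn, zero_dotProduct, zero_mul, sub_zero] at lagrange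
  refine dotProduct_self_eq_zero.1 ((mul_eq_zero.1 lagrange.symm).resolve_right ?_)
  exact mt dotProduct_self_eq_zero.1 hpq

theorem eq_zero_of_mul_transpose_eq_zero_of_mulVec_cross_eq_zero {m : Type*}
    {A : Matrix (Fin 2) (Fin 3) R} {M : Matrix m (Fin 3) R} (hA : A 0 ⨯₃ A 1 ≠ 0)
    (hM : M * Aᵀ = 0) (hn : M *ᵥ (A 0 ⨯₃ A 1) = 0) : M = 0 :=
  funext fun i => eq_zero_of_dotProduct_eq_zero_of_dotProduct_cross_eq_zero hA
    (congrFun₂ hM i 0) (congrFun₂ hM i 1) (congrFun hn i)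

end CrossProduct

section BilinearCalculus

variable {𝕜 E F G H : Type*} [NontriviallyNormedField 𝕜] [CompleteSpace 𝕜]
  [NormedAddCommGroup E] [NormedSpace 𝕜 E]
  [NormedAddCommGroup F] [NormedSpace 𝕜 F] [FiniteDimensional 𝕜 F]
  [NormedAddCommGroup G] [NormedSpace 𝕜 G] [FiniteDimensional 𝕜 G]
  [NormedAddCommGroup H] [NormedSpace 𝕜 H]
  {f : E → F} {g : E → G} {u : E}

theorem differentiableAt_bilinear (B : F →ₗ[𝕜] G →ₗ[𝕜] H)
    (hf : DifferentiableAt 𝕜 f u) (hg : DifferentiableAt 𝕜 g u) :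
    DifferentiableAt 𝕜 (fun v => B (f v) (g v)) u :=
  (B.toContinuousBilinearMap.hasFDerivAt_of_bilinear
    hf.hasFDerivAt hg.hasFDerivAt).differentiableAt

theorem fderiv_bilinear_apply (B : F →ₗ[𝕜] G →ₗ[𝕜] H)
    (hf : DifferentiableAt 𝕜 f u) (hg : DifferentiableAt 𝕜 g u) (y : E) :
    fderiv 𝕜 (fun v => B (f v) (g v)) u y =
      B (f u) (fderiv 𝕜 g u y) + B (fderiv 𝕜 f u y) (g u) :=
  congrArg (· y) (B.toContinuousBilinearMap.hasFDerivAt_of_bilinear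
    hf.hasFDerivAt hg.hasFDerivAt).fderiv

theorem fderiv_dotProduct_eq_neg_of_eventually_const {ι : Type*} [Fintype ι] {f g : E → ι → 𝕜}
    {c : 𝕜} (hf : DifferentiableAt 𝕜 f u) (hg : DifferentiableAt 𝕜 g u)
    (hc : ∀ᶠ v in 𝓝 u, f v ⬝ᵥ g v = c) (y : E) :
    fderiv 𝕜 f u y ⬝ᵥ g u = -(f u ⬝ᵥ fderiv 𝕜 g u y) := by
  have product_rule := fderiv_bilinear_apply (dotProductBilin 𝕜 𝕜) hf hg y
  have const : (fun v => dotProductBilin 𝕜 𝕜 (f v) (g v)) =ᶠ[𝓝 u] fun _ => c := hc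
  rw [const.fderiv_eq, fderiv_fun_const] at product_rule
  exact eq_neg_of_add_eq_zero_right product_rule.symm

end BilinearCalculus

theorem norm3_mul_self (a : Vec3) : norm3 a * norm3 a = a ⬝ᵥ a :=
  Real.mul_self_sqrt (Finset.sum_nonneg fun k _ => mul_self_nonneg (a k))

theorem norm3_ne_zero {a : Vec3} (ha : a ≠ 0) : norm3 a ≠ 0 := by
  intro h
  have := norm3_mul_self a
  rw [h, zero_mul] at this
  exact ha (dotProduct_self_eq_zero.1 this.symm)

theorem differentiableAt_norm3 {a : Vec3} (ha : a ≠ 0) : DifferentiableAt ℝ norm3 a := by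
  have hdot : DifferentiableAt ℝ (fun b => dot3 b b) a := by
    unfold dot3
    fun_prop
  exact hdot.sqrt (mt dotProduct_self_eq_zero.1 ha)

/-- The matrix whose rows are the partial derivatives `f_{/1}` and `f_{/2}`, that is, the transpose
of the Jacobian matrix. It turns the fundamental forms and the Beltrami operators into matrix
products. -/
def pdMatrix (f : Param → Vec3) (u : Param) : Matrix (Fin 2) (Fin 3) ℝ :=
  Matrix.of fun i => pd i f u

theorem beltrami1_eq_vecMul (a : Param → Matrix (Fin 2) (Fin 2) ℝ) (φ : Param → ℝ)
    (ψ : Param → Vec3) (u : Param) :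
    beltrami1 a φ ψ u = (fun i => pds i φ u) ᵥ* ((a u)⁻¹ * pdMatrix ψ u) := by
  rw [← Matrix.vecMul_vecMul, Matrix.vecMul_eq_sum, beltrami1, Finset.sum_comm]
  simp only [Matrix.vecMul, dotProduct, Finset.sum_smul, mul_comm]
  rfl

section Surface

variable {x : Param → Vec3} {u : Param}

theorem fformI_eq_pdMatrix_mul_transpose (x : Param → Vec3) (u : Param) :
    fformI x u = pdMatrix x u * (pdMatrix x u)ᵀ :=
  rfl

theorem isUnit_det_fformI (hc : pd 0 x u ⨯₃ pd 1 x u ≠ 0) : IsUnit (fformI x u).det := by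
  rw [fformI_eq_pdMatrix_mul_transpose, det_mul_transpose_eq_cross_dotProduct_cross,
    isUnit_iff_ne_zero]
  exact mt dotProduct_self_eq_zero.1 hc

theorem differentiableAt_pd (hx : ContDiffAt ℝ 2 x u) (i : Fin 2) :
    DifferentiableAt ℝ (pd i x) u := by
  have hx' : ContDiffAt ℝ 1 (fderiv ℝ x) u := hx.fderiv_right (by norm_num)
  exact (hx'.differentiableAt one_ne_zero).clm_apply (differentiableAt_const _)

theorem differentiableAt_cross_pd (hx : ContDiffAt ℝ 2 x u) :
    DifferentiableAt ℝ (fun v => pd 0 x v ⨯₃ pd 1 x v) u :=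
  differentiableAt_bilinear crossProduct (differentiableAt_pd hx 0) (differentiableAt_pd hx 1)

theorem differentiableAt_gaussMap (hx : ContDiffAt ℝ 2 x u) (hc : pd 0 x u ⨯₃ pd 1 x u ≠ 0) :
    DifferentiableAt ℝ (gaussMap x) u := by
  have hcross := differentiableAt_cross_pd hx
  have hnorm : DifferentiableAt ℝ (fun v => norm3 (pd 0 x v ⨯₃ pd 1 x v)) u :=
    DifferentiableAt.comp (g := norm3) u (differentiableAt_norm3 hc) hcross
  exact (hnorm.inv (norm3_ne_zero hc)).smul hcross

theorem gaussMap_dotProduct_pd (x : Param → Vec3) (u : Param) (j : Fin 2) :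
    gaussMap x u ⬝ᵥ pd j x u = 0 := by
  have hcross : pd j x u ⬝ᵥ pd 0 x u ⨯₃ pd 1 x u = 0 :=
    congrFun (mulVec_cross_self (pdMatrix x u)) j
  rw [gaussMap, smul_dotProduct, dotProduct_comm, hcross, smul_zero]

theorem gaussMap_dotProduct_self (hc : pd 0 x u ⨯₃ pd 1 x u ≠ 0) :
    gaussMap x u ⬝ᵥ gaussMap x u = 1 := by
  have := norm3_ne_zero hc
  rw [gaussMap, smul_dotProduct, dotProduct_smul, ← norm3_mul_self, smul_eq_mul, smul_eq_mul]
  field_simp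

theorem pdMatrix_gaussMap_mul_transpose (hx : ContDiffAt ℝ 2 x u)
    (hc : pd 0 x u ⨯₃ pd 1 x u ≠ 0) :
    pdMatrix (gaussMap x) u * (pdMatrix x u)ᵀ = -fformII x u := by
  ext i j
  have h := fderiv_dotProduct_eq_neg_of_eventually_const (differentiableAt_gaussMap hx hc)
    (differentiableAt_pd hx j) (.of_forall fun v => gaussMap_dotProduct_pd x v j) (Pi.single i 1)
  rwa [dotProduct_comm (gaussMap x u)] at h

theorem pdMatrix_gaussMap_mulVec_gaussMap (hx : ContDiffAt ℝ 2 x u)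
    (hc : pd 0 x u ⨯₃ pd 1 x u ≠ 0) : pdMatrix (gaussMap x) u *ᵥ gaussMap x u = 0 := by
  have hn := differentiableAt_gaussMap hx hc
  have unit_near : ∀ᶠ v in 𝓝 u, gaussMap x v ⬝ᵥ gaussMap x v = 1 :=
    ((differentiableAt_cross_pd hx).continuousAt.eventually_ne hc).mono
      fun _ => gaussMap_dotProduct_self
  funext i
  have h := fderiv_dotProduct_eq_neg_of_eventually_const hn hn unit_near (Pi.single i 1)
  rw [dotProduct_comm (gaussMap x u)] at h
  exact self_eq_neg.1 h

theorem pdMatrix_gaussMap_mulVec_cross (hx : ContDiffAt ℝ 2 x u)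
    (hc : pd 0 x u ⨯₃ pd 1 x u ≠ 0) :
    pdMatrix (gaussMap x) u *ᵥ (pd 0 x u ⨯₃ pd 1 x u) = 0 := by
  have h := pdMatrix_gaussMap_mulVec_gaussMap hx hc
  rw [gaussMap, Matrix.mulVec_smul] at h
  exact (smul_eq_zero.1 h).resolve_left (inv_ne_zero (norm3_ne_zero hc))

theorem fformII_inv_mul_pdMatrix_gaussMap (hx : ContDiffAt ℝ 2 x u)
    (hc : pd 0 x u ⨯₃ pd 1 x u ≠ 0) (hpar : (fformII x u).det ≠ 0) :
    (fformII x u)⁻¹ * pdMatrix (gaussMap x) u = -((fformI x u)⁻¹ * pdMatrix x u) := by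
  rw [eq_neg_iff_add_eq_zero]
  refine eq_zero_of_mul_transpose_eq_zero_of_mulVec_cross_eq_zero (A := pdMatrix x u) hc ?_ ?_
  · rw [Matrix.add_mul, Matrix.mul_assoc, Matrix.mul_assoc, ← fformI_eq_pdMatrix_mul_transpose,
      pdMatrix_gaussMap_mul_transpose hx hc, Matrix.mul_neg, Matrix.nonsing_inv_mul _ hpar.isUnit,
      Matrix.nonsing_inv_mul _ (isUnit_det_fformI hc), neg_add_cancel]
  · have hN : pdMatrix (gaussMap x) u *ᵥ (pdMatrix x u 0 ⨯₃ pdMatrix x u 1) = 0 :=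
      pdMatrix_gaussMap_mulVec_cross hx hc
    rw [Matrix.add_mulVec, ← Matrix.mulVec_mulVec, ← Matrix.mulVec_mulVec, mulVec_cross_self, hN,
      Matrix.mulVec_zero, Matrix.mulVec_zero, add_zero]

end Surface

theorem stmt0_general {x : Param → Vec3} {φ : Param → ℝ} {u : Param} (hx : ContDiffAt ℝ 2 x u)
    (himm : LinearIndependent ℝ ![pd 0 x u, pd 1 x u]) (hpar : (fformII x u).det ≠ 0)
    (_hφ : DifferentiableAt ℝ φ u) :
    beltrami1 (fformI x) φ x u + beltrami1 (fformII x) φ (gaussMap x) u = 0 := by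
  have hc : pd 0 x u ⨯₃ pd 1 x u ≠ 0 := crossProduct_ne_zero_iff_linearIndependent.2 himm
  rw [beltrami1_eq_vecMul, beltrami1_eq_vecMul, fformII_inv_mul_pdMatrix_gaussMap hx hc hpar,
    Matrix.vecMul_neg, add_neg_cancel]

/-- `∇^I(φ, x) + ∇^{II}(φ, n) = 0` on `U`. -/
theorem stmt0 (U : Set Param) (x : Param → Vec3)
    (hU : IsOpen U) (hUconn : IsConnected U)
    (hx : ContDiffOn ℝ (⊤ : ℕ∞) x U) (himm : Immersed x U)
    (hpar : ∀ u ∈ U, (fformII x u).det ≠ 0)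
    (φ : Param → ℝ) (hφ : ContDiffOn ℝ (⊤ : ℕ∞) φ U) :
    ∀ u ∈ U,
      beltrami1 (fformI x) φ x u + beltrami1 (fformII x) φ (gaussMap x) u = 0 := by
  intro u hu
  have hUu : U ∈ 𝓝 u := hU.mem_nhds hu
  have two_le : (2 : WithTop ℕ∞) ≤ (⊤ : ℕ∞) := WithTop.coe_le_coe.2 le_top
  exact stmt0_general ((hx.contDiffAt hUu).of_le two_le) (himm u hu) (hpar u hu)
    ((hφ.contDiffAt hUu).differentiableAt (by simp))
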